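/- arXiv:2604.00914 — 2 statements merged into one kernel-verified Lean document; each statement's English description precedes it below -/
import Mathlib

section
/- Let S_k(x) = Σ_{j=1}^{k} sin(j x)/j denote the k-th partial sum of the Fourier series of f(x) = (π − x)/2, and set R_k(x) = (π − x)/2 − S_k(x). Then for every integer k ≥ 1 and every real x ∈ (0, π], one has |R_k(x)| ≤ 1/((k+1)·sin(x/2)). -/
open Real

noncomputable def lzR (k : ℕ) (x : ℝ) : ℝ :=
  (Real.pi - x) / 2 - ∑ j ∈ Finset.Icc 1 k, Real.sin (j * x) / j

theorem lzR_succ (k : ℕ) (x : ℝ) :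
    lzR (k + 1) x = lzR k x - Real.sin ((k + 1) * x) / (k + 1) := by
  unfold lzR
  rw [Finset.sum_Icc_succ_top (by omega)]
  push_cast
  ring

theorem lzR_deriv (k : ℕ) (x : ℝ) (hs : Real.sin (x / 2) ≠ 0) :
    HasDerivAt (lzR k) (-(Real.sin ((k + 1 / 2) * x) / (2 * Real.sin (x / 2)))) x := by
  induction k with
  | zero =>
    have h : HasDerivAt (fun y : ℝ => (Real.pi - y) / 2) (-1 / 2) x :=
      ((hasDerivAt_id x).const_sub Real.pi).div_const 2
    have e : lzR 0 = fun y : ℝ => (Real.pi - y) / 2 := by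
      funext y; simp [lzR]
    rw [e]
    convert! h using 1
    have : ((0 : ℕ) + 1 / 2 : ℝ) * x = x / 2 := by push_cast; ring
    rw [this]
    field_simp
  | succ k ih =>
    have e : lzR (k + 1) = fun y => lzR k y - Real.sin ((k + 1) * y) / (k + 1) := by
      funext y; exact lzR_succ k y
    rw [e]
    have hk : (k + 1 : ℝ) ≠ 0 := by positivity
    have h1 : HasDerivAt (fun y : ℝ => Real.sin ((k + 1) * y) / (k + 1))
        (Real.cos ((k + 1) * x) * ((k + 1) * 1) / (k + 1)) x :=
      (((hasDerivAt_id x).const_mul (k + 1 : ℝ)).sin).div_const _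
    convert! ih.sub h1 using 1
    have e1 : ((k + 1 : ℕ) + 1 / 2 : ℝ) * x = (k + 1) * x + x / 2 := by push_cast; ring
    have e2 : (k + 1 / 2 : ℝ) * x = (k + 1) * x - x / 2 := by ring
    rw [e1, e2, Real.sin_add, Real.sin_sub]
    field_simp
    ring

theorem lzR_pi (k : ℕ) : lzR k Real.pi = 0 := by
  simp [lzR, Real.sin_nat_mul_pi]

theorem lz_weak_aux (k : ℕ) (x : ℝ) (hx : x ∈ Set.Ioc (0 : ℝ) Real.pi) (ε : ℝ) (hε : ε = 1 ∨ ε = -1) :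
    0 ≤ ε * (lzR k x - Real.cos ((k + 1 / 2) * x) / (2 * (k + 1 / 2) * Real.sin (x / 2)))
      + 1 / (2 * (k + 1 / 2) * Real.sin (x / 2)) := by
  set m : ℝ := k + 1 / 2 with hm
  have hmp : 0 < m := by positivity
  set H : ℝ → ℝ := fun t => ε * (lzR k t - Real.cos (m * t) / (2 * m * Real.sin (t / 2)))
      + 1 / (2 * m * Real.sin (t / 2)) with hH
  have hpos : ∀ t ∈ Set.Icc x Real.pi, 0 < Real.sin (t / 2) := fun t ht =>
    Real.sin_pos_of_pos_of_lt_pi (by linarith [hx.1, ht.1]) (by linarith [hx.1, ht.1, ht.2])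
  have hder : ∀ t ∈ Set.Icc x Real.pi, HasDerivAt H
      ((ε * Real.cos (m * t) - 1) * Real.cos (t / 2) / (4 * m * Real.sin (t / 2) ^ 2)) t := by
    intro t ht
    have hs := (hpos t ht).ne'
    have h1 : HasDerivAt (fun t : ℝ => 2 * m * Real.sin (t / 2))
        (2 * m * (Real.cos (t / 2) * (1 / 2))) t :=
      (((hasDerivAt_id t).div_const 2).sin).const_mul _
    have h2 : HasDerivAt (fun t : ℝ => Real.cos (m * t)) (-Real.sin (m * t) * (m * 1)) t :=
      ((hasDerivAt_id t).const_mul m).cos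
    have hne : 2 * m * Real.sin (t / 2) ≠ 0 := by positivity
    have h3 := (((lzR_deriv k t hs).sub (h2.div h1 hne)).const_mul ε).add
      ((hasDerivAt_const t (1 : ℝ)).div h1 hne)
    convert! h3 using 1
    rw [← hm]
    field_simp
    ring
  have hanti : AntitoneOn H (Set.Icc x Real.pi) := by
    apply antitoneOn_of_deriv_nonpos (convex_Icc _ _)
    · exact fun t ht => (hder t ht).continuousAt.continuousWithinAt
    · exact fun t ht => (hder t (interior_subset ht)).differentiableAt.differentiableWithinAt
    · intro t ht
      have ht := interior_subset ht
      rw [(hder t ht).deriv]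
      have hc : 0 ≤ Real.cos (t / 2) := Real.cos_nonneg_of_mem_Icc
        ⟨by linarith [hx.1, ht.1, Real.pi_pos], by linarith [ht.2]⟩
      have he : ε * Real.cos (m * t) - 1 ≤ 0 := by
        rcases hε with rfl | rfl
        · linarith [Real.cos_le_one (m * t)]
        · linarith [Real.neg_one_le_cos (m * t)]
      exact div_nonpos_of_nonpos_of_nonneg (mul_nonpos_of_nonpos_of_nonneg he hc) (by positivity)
  have h := hanti ⟨le_rfl, hx.2⟩ ⟨hx.2, le_rfl⟩ hx.2
  refine le_trans ?_ h
  have hc : Real.cos (m * Real.pi) = 0 := by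
    rw [Real.cos_eq_zero_iff]
    exact ⟨k, by rw [hm]; push_cast; ring⟩
  simp only [hH, lzR_pi, hc, Real.sin_pi_div_two]
  simp
  positivity

theorem lz_weak (k : ℕ) (x : ℝ) (hx : x ∈ Set.Ioc (0 : ℝ) Real.pi) :
    |lzR k x| ≤ 1 / ((k + 1 / 2) * Real.sin (x / 2)) := by
  have h1 := lz_weak_aux k x hx 1 (Or.inl rfl)
  have h2 := lz_weak_aux k x hx (-1) (Or.inr rfl)
  have hs : 0 < Real.sin (x / 2) :=
    Real.sin_pos_of_pos_of_lt_pi (by linarith [hx.1]) (by linarith [hx.1, hx.2])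
  set m : ℝ := k + 1 / 2 with hm
  have hmp : 0 < m := by positivity
  have e : 1 / (m * Real.sin (x / 2)) = 2 * (1 / (2 * m * Real.sin (x / 2))) := by field_simp
  have hq : 0 < 1 / (2 * m * Real.sin (x / 2)) := by positivity
  rw [e]
  rw [div_eq_mul_one_div (Real.cos _)] at h1 h2
  have c1 := mul_le_mul_of_nonneg_right (Real.cos_le_one (m * x)) hq.le
  have c2 := mul_le_mul_of_nonneg_right (Real.neg_one_le_cos (m * x)) hq.le
  rw [abs_le]
  constructor <;> linarith

noncomputable def lzE (x : ℝ) (n : ℕ) : ℝ :=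
  2 * Real.sin (x / 2) * lzR n x - Real.cos ((n + 1 / 2) * x) / (n + 1)

theorem lzE_step (x : ℝ) (n : ℕ) :
    |lzE x n - lzE x (n + 1)| ≤ 1 / (n + 1) - 1 / (n + 2) := by
  have e : lzE x n - lzE x (n + 1)
      = -Real.cos ((n + 3 / 2) * x) * (1 / (n + 1) - 1 / (n + 2)) := by
    unfold lzE
    rw [lzR_succ]
    have e1 : (n + 1 / 2 : ℝ) * x = (n + 1) * x - x / 2 := by ring
    have e2 : (n + 3 / 2 : ℝ) * x = (n + 1) * x + x / 2 := by ring
    have e3 : ((n + 1 : ℕ) + 1 / 2 : ℝ) * x = (n + 1) * x + x / 2 := by push_cast; ring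
    rw [e1, e2, e3, Real.cos_add, Real.cos_sub]
    have h1 : (n + 1 : ℝ) ≠ 0 := by positivity
    have h2 : (n + 2 : ℝ) ≠ 0 := by positivity
    have h3 : ((n + 1 : ℕ) + 1 : ℝ) = n + 2 := by push_cast; ring
    rw [h3]
    field_simp
    ring
  have hp : (0 : ℝ) ≤ 1 / (n + 1) - 1 / (n + 2) := by
    rw [sub_nonneg]
    exact one_div_le_one_div_of_le (by positivity) (by linarith)
  rw [e, abs_mul, abs_neg, abs_of_nonneg hp]
  exact mul_le_of_le_one_left hp (Real.abs_cos_le_one _)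

theorem lzE_tail (x : ℝ) (k d : ℕ) :
    |lzE x k| ≤ |lzE x (k + d)| + 1 / (k + 1) - 1 / (k + d + 1) := by
  induction d with
  | zero => simp
  | succ d ih =>
    have h := lzE_step x (k + d)
    have h2 := abs_sub_abs_le_abs_sub (lzE x (k + d)) (lzE x (k + d + 1))
    rw [← add_assoc]
    push_cast at *
    have e : (k + (d + 1) + 1 : ℝ) = k + d + 2 := by ring
    rw [e]
    linarith

theorem lzE_bound (x : ℝ) (hx : x ∈ Set.Ioc (0 : ℝ) Real.pi) (k : ℕ) :
    |lzE x k| ≤ 1 / (k + 1) := by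
  have hs : 0 < Real.sin (x / 2) :=
    Real.sin_pos_of_pos_of_lt_pi (by linarith [hx.1]) (by linarith [hx.1, hx.2])
  have key : ∀ d : ℕ, |lzE x k| ≤ 4 * (1 / ((d : ℝ) + 1)) + 1 / (k + 1) := by
    intro d
    have h := lzE_tail x k d
    have hw := lz_weak (k + d) x hx
    have hb : |lzE x (k + d)| ≤ 4 * (1 / ((d : ℝ) + 1)) + 1 / (k + d + 1) := by
      unfold lzE
      refine (abs_sub _ _).trans ?_
      push_cast at *
      refine add_le_add ?_ ?_
      · rw [abs_mul, abs_of_pos (by positivity : 0 < 2 * Real.sin (x / 2))]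
        refine (mul_le_mul_of_nonneg_left hw (by positivity)).trans ?_
        have e : 2 * Real.sin (x / 2) * (1 / (((k : ℝ) + d + 1 / 2) * Real.sin (x / 2)))
            = 4 * (1 / (2 * k + 2 * d + 1)) := by
          field_simp
          ring
        rw [e]
        gcongr
        have : (0 : ℝ) ≤ k := by positivity
        have : (0 : ℝ) ≤ d := by positivity
        linarith
      · rw [abs_div, abs_of_pos (by positivity : (0 : ℝ) < k + d + 1)]
        gcongr
        exact Real.abs_cos_le_one _
    linarith
  have hl : Filter.Tendsto (fun d : ℕ => 4 * (1 / ((d : ℝ) + 1)) + 1 / ((k : ℝ) + 1))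
      Filter.atTop (nhds (4 * 0 + 1 / ((k : ℝ) + 1))) :=
    (tendsto_one_div_add_atTop_nhds_zero_nat.const_mul 4).add_const _
  have := ge_of_tendsto' hl key
  linarith

/-- For `S_k(x) = ∑_{j=1}^k sin(jx)/j`, the partial sum of the Fourier series of
`f(x) = (π - x)/2`, setting `R_k(x) = (π - x)/2 - S_k(x)`, one has
`|R_k(x)| ≤ 1/((k+1) sin(x/2))` for all integers `k ≥ 1` and `x ∈ (0, π]`. -/
theorem lanczos_remainder_bound (k : ℕ) (hk : 1 ≤ k) (x : ℝ)
    (hx : x ∈ Set.Ioc (0 : ℝ) Real.pi) :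
    |(Real.pi - x) / 2 - ∑ j ∈ Finset.Icc 1 k, Real.sin (j * x) / j|
      ≤ 1 / ((k + 1) * Real.sin (x / 2)) := by
  change |lzR k x| ≤ _
  have hs : 0 < Real.sin (x / 2) :=
    Real.sin_pos_of_pos_of_lt_pi (by linarith [hx.1]) (by linarith [hx.1, hx.2])
  have h := lzE_bound x hx k
  have hkp : (0 : ℝ) < k + 1 := by positivity
  have hc : |Real.cos ((k + 1 / 2) * x) / (k + 1)| ≤ 1 / (k + 1) := by
    rw [abs_div, abs_of_pos hkp]
    gcongr
    exact Real.abs_cos_le_one _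
  have h2 : |2 * Real.sin (x / 2) * lzR k x| ≤ 2 * (1 / (k + 1)) := by
    unfold lzE at h
    rw [abs_le] at *
    constructor <;> linarith [h.1, h.2, hc.1, hc.2]
  rw [abs_mul, abs_of_pos (by positivity : 0 < 2 * Real.sin (x / 2))] at h2
  have h3 : Real.sin (x / 2) * |lzR k x| ≤ 1 / (k + 1) := by linarith
  rw [le_div_iff₀ hkp] at h3
  rw [le_div_iff₀ (by positivity)]
  linarith
end

section
/- For every integer k ≥ 1 and every real x ∈ (0, 2π), the series Σ_{j=k+1}^{∞} cos((j+1/2)x)/(j(j+1)) converges absolutely, and 2·sin(x/2)·R_k(x) = cos((k+1/2)x)/(k+1) − Σ_{j=k+1}^{∞} cos((j+1/2)x)/(j(j+1)), where R_k(x) = (π − x)/2 − Σ_{j=1}^{k} sin(j x)/j. -/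
open Real

lemma aux_summ : Summable fun n : ℕ => (1 : ℝ) / ((n + 1) * (n + 2)) := by
  have h := (summable_nat_add_iff 1).2 (Real.summable_one_div_nat_pow.2 (by norm_num : 1 < 2))
  refine Summable.of_nonneg_of_le (fun n => by positivity) (fun n => ?_) h
  push_cast
  apply one_div_le_one_div_of_le (by positivity)
  nlinarith [(Nat.cast_nonneg n : (0:ℝ) ≤ n)]

lemma aux_open (z : ℂ) (hz : ‖z‖ < 1) :
    (1 - z) * (-Complex.log (1 - z)) =
      z - ∑' n : ℕ, z ^ (n + 2) / (((n : ℂ) + 1) * (n + 2)) := by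
  have h0 := Complex.hasSum_taylorSeries_neg_log hz
  have h1 := (hasSum_nat_add_iff' 1).2 h0
  have h2 := (hasSum_nat_add_iff' 2).2 h0
  have h3 := ((h1.mul_left z).sub h2).tsum_eq
  have h4 : (∑' n : ℕ, z ^ (n + 2) / (((n : ℂ) + 1) * (n + 2))) =
      ∑' n : ℕ, (z * (z ^ (n + 1) / ((n + 1 : ℕ) : ℂ)) - z ^ (n + 2) / ((n + 2 : ℕ) : ℂ)) := by
    congr 1; ext n
    have a1 : (n : ℂ) + 1 ≠ 0 := by exact_mod_cast Nat.succ_ne_zero n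
    have a2 : (n : ℂ) + 2 ≠ 0 := by exact_mod_cast Nat.succ_ne_zero (n + 1)
    push_cast
    field_simp
    ring
  rw [h4, h3]
  simp [Finset.sum_range_succ]
  ring

lemma aux_bdry (w : ℂ) (hw : ‖w‖ = 1) (hre : w.re < 1) :
    (1 - w) * (-Complex.log (1 - w)) =
      w - ∑' n : ℕ, w ^ (n + 2) / (((n : ℂ) + 1) * (n + 2)) := by
  have key : Set.EqOn (fun r : ℝ => (1 - r * w) * (-Complex.log (1 - r * w)))
      (fun r : ℝ => r * w - ∑' n : ℕ, (r * w) ^ (n + 2) / (((n : ℂ) + 1) * (n + 2)))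
      (Set.Icc 0 1) := by
    apply Set.EqOn.of_subset_closure (s := Set.Ico (0:ℝ) 1)
    · intro r hr
      apply aux_open
      simp [hw, abs_of_nonneg hr.1, hr.2]
    · refine ContinuousOn.mul (by fun_prop) (ContinuousOn.neg (ContinuousOn.clog (by fun_prop) ?_))
      intro r hr
      left
      have : r * w.re < 1 := by
        rcases hr with ⟨h0, h1⟩
        by_cases h : w.re ≤ 0
        · nlinarith
        · nlinarith
      simpa using this
    · refine ContinuousOn.sub (by fun_prop) (continuousOn_tsum (fun n => by fun_prop) aux_summ ?_)
      intro n r hr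
      have e1 : ‖(n : ℂ) + 1‖ = n + 1 := by exact_mod_cast Complex.norm_natCast (n + 1)
      have e2 : ‖(n : ℂ) + 2‖ = n + 2 := by exact_mod_cast Complex.norm_natCast (n + 2)
      rw [norm_div, norm_mul, e1, e2, norm_pow, norm_mul, hw]
      gcongr
      apply pow_le_one₀ (by positivity)
      simpa [abs_of_nonneg hr.1] using hr.2
    · exact Set.Ico_subset_Icc_self
    · rw [closure_Ico (by norm_num)]
  simpa using key (show (1:ℝ) ∈ Set.Icc (0:ℝ) 1 by simp)

lemma aux_summ' (x : ℝ) (k : ℕ) : Summable fun j : ℕ =>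
    |Real.cos (((j + k + 1 : ℕ) + 1 / 2) * x) / ((j + k + 1 : ℕ) * ((j + k + 1 : ℕ) + 1))| := by
  refine Summable.of_nonneg_of_le (fun n => abs_nonneg _) (fun n => ?_)
    ((summable_nat_add_iff k).2 aux_summ)
  rw [abs_div, abs_of_nonneg (by positivity : (0:ℝ) ≤ ((n + k + 1 : ℕ) : ℝ) * ((n + k + 1 : ℕ) + 1))]
  have : (((n + k + 1 : ℕ) : ℝ) * ((n + k + 1 : ℕ) + 1)) = (((n + k : ℕ) : ℝ) + 1) * ((n + k : ℕ) + 2) := by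
    push_cast; ring
  rw [this]
  gcongr
  exact Real.abs_cos_le_one _

lemma aux_base (x : ℝ) (hx : x ∈ Set.Ioo (0 : ℝ) (2 * Real.pi)) :
    2 * Real.sin (x / 2) * ((Real.pi - x) / 2) = Real.cos (x / 2) -
      ∑' j : ℕ, Real.cos (((j + 0 + 1 : ℕ) + 1 / 2) * x) /
        ((j + 0 + 1 : ℕ) * ((j + 0 + 1 : ℕ) + 1)) := by
  have hs : 0 < Real.sin (x / 2) :=
    Real.sin_pos_of_pos_of_lt_pi (by linarith [hx.1]) (by linarith [hx.2])
  set w := Complex.exp (x * Complex.I) with hw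
  set v := Complex.exp (-((x / 2 : ℝ) * Complex.I)) with hv
  have hwn : ‖w‖ = 1 := Complex.norm_exp_ofReal_mul_I x
  have hc : Real.cos x = 1 - 2 * Real.sin (x / 2) ^ 2 := by
    have := Real.cos_two_mul (x / 2)
    rw [show 2 * (x / 2) = x by ring] at this
    nlinarith [Real.sin_sq_add_cos_sq (x / 2)]
  have hsn : Real.sin x = 2 * Real.sin (x / 2) * Real.cos (x / 2) := by
    rw [← Real.sin_two_mul]; ring_nf
  have hre : w.re < 1 := by
    rw [hw, Complex.exp_ofReal_mul_I_re, hc]; nlinarith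
  have h := aux_bdry w hwn hre
  have harg : (Complex.log (1 - w)).im = (x - Real.pi) / 2 := by
    rw [Complex.log_im]
    have : 1 - w = ((2 * Real.sin (x / 2) : ℝ) : ℂ) *
        (Complex.cos ((x - Real.pi) / 2 : ℝ) + Complex.sin ((x - Real.pi) / 2 : ℝ) * Complex.I) := by
      rw [← Complex.ofReal_cos, ← Complex.ofReal_sin,
        show (x - Real.pi) / 2 = x / 2 - Real.pi / 2 by ring,
        Real.cos_sub_pi_div_two, Real.sin_sub_pi_div_two]
      apply Complex.ext
      · rw [Complex.sub_re, hw, Complex.exp_ofReal_mul_I_re, hc]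
        simp [-Complex.ofReal_sin, -Complex.ofReal_cos, -Complex.ofReal_mul]
        ring
      · rw [Complex.sub_im, hw, Complex.exp_ofReal_mul_I_im, hsn]
        simp [-Complex.ofReal_sin, -Complex.ofReal_cos, -Complex.ofReal_mul]
    rw [this, Complex.arg_mul_cos_add_sin_mul_I (by positivity)]
    constructor <;> linarith [hx.1, hx.2, Real.pi_pos]
  have hvw : v * (1 - w) = ((-2 * Real.sin (x / 2) : ℝ) : ℂ) * Complex.I := by
    have : v * w = Complex.exp ((x / 2 : ℝ) * Complex.I) := by
      rw [hv, hw, ← Complex.exp_add]; congr 1; push_cast; ring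
    rw [mul_sub, this, mul_one, hv, ← neg_mul, ← Complex.ofReal_neg]
    apply Complex.ext
    · rw [Complex.sub_re, Complex.exp_ofReal_mul_I_re, Complex.exp_ofReal_mul_I_re]
      simp [-Complex.ofReal_sin, -Complex.ofReal_mul]
    · rw [Complex.sub_im, Complex.exp_ofReal_mul_I_im, Complex.exp_ofReal_mul_I_im]
      simp [-Complex.ofReal_sin, -Complex.ofReal_mul]
      ring
  have hpow : ∀ n : ℕ, v * w ^ (n + 1) = Complex.exp (((n + 1 / 2) * x : ℝ) * Complex.I) := by
    intro n
    rw [hv, hw, ← Complex.exp_nat_mul, ← Complex.exp_add]; congr 1; push_cast; ring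
  have hS : Summable fun n : ℕ => v * (w ^ (n + 2) / (((n : ℂ) + 1) * (n + 2))) := by
    apply Summable.mul_left
    apply Summable.of_norm_bounded aux_summ
    intro n
    have e1 : ‖(n : ℂ) + 1‖ = n + 1 := by exact_mod_cast Complex.norm_natCast (n + 1)
    have e2 : ‖(n : ℂ) + 2‖ = n + 2 := by exact_mod_cast Complex.norm_natCast (n + 2)
    rw [norm_div, norm_mul, e1, e2, norm_pow, hwn, one_pow]
  have h2 := congrArg (fun z => (v * z).re) h
  beta_reduce at h2
  rw [← mul_assoc, hvw, mul_sub, ← tsum_mul_left, Complex.sub_re, Complex.re_tsum hS] at h2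
  have h3 : (v * w).re = Real.cos (x / 2) := by
    have := hpow 0
    rw [zero_add, pow_one] at this
    rw [this, Complex.exp_ofReal_mul_I_re]; congr 1; push_cast; ring
  have h4 : ∀ n : ℕ, (v * (w ^ (n + 2) / (((n : ℂ) + 1) * (n + 2)))).re =
      Real.cos (((n + 0 + 1 : ℕ) + 1 / 2) * x) / ((n + 0 + 1 : ℕ) * ((n + 0 + 1 : ℕ) + 1)) := by
    intro n
    rw [← mul_div_assoc, hpow (n + 1),
      show ((n : ℂ) + 1) * (n + 2) = (((n + 1) * (n + 2) : ℝ) : ℂ) by push_cast; ring,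
      Complex.div_ofReal_re, Complex.exp_ofReal_mul_I_re]
    push_cast
    ring_nf
  rw [h3, tsum_congr h4] at h2
  rw [← h2, mul_assoc (((-2 * Real.sin (x / 2) : ℝ) : ℂ)), Complex.re_ofReal_mul]
  simp only [Complex.mul_re, Complex.I_re, Complex.I_im, Complex.neg_im, Complex.neg_re, harg]
  ring

lemma aux_all (x : ℝ) (hx : x ∈ Set.Ioo (0 : ℝ) (2 * Real.pi)) (k : ℕ) :
    2 * Real.sin (x / 2) * ((Real.pi - x) / 2 - ∑ j ∈ Finset.Icc 1 k, Real.sin (j * x) / j)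
      = Real.cos ((k + 1 / 2) * x) / (k + 1)
        - ∑' j : ℕ,
            Real.cos (((j + k + 1 : ℕ) + 1 / 2) * x) / ((j + k + 1 : ℕ) * ((j + k + 1 : ℕ) + 1)) := by
  induction k with
  | zero =>
    have := aux_base x hx
    rw [show ((0:ℕ) + 1 / 2 : ℝ) * x = x / 2 by push_cast; ring]
    simpa using this
  | succ k ih =>
    rw [Finset.sum_Icc_succ_top (by omega)]
    rw [(aux_summ' x k).of_abs.tsum_eq_zero_add] at ih
    have e : ∀ j : ℕ, j + 1 + k + 1 = j + (k + 1) + 1 := fun j => by ring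
    simp only [e] at ih
    have t : 2 * Real.sin (x / 2) * Real.sin ((k + 1 : ℕ) * x) =
        Real.cos ((k + 1 / 2) * x) - Real.cos (((k + 1 : ℕ) + 1 / 2) * x) := by
      rw [show ((k : ℝ) + 1 / 2) * x = (k + 1 : ℕ) * x - x / 2 by push_cast; ring,
        show (((k + 1 : ℕ) : ℝ) + 1 / 2) * x = (k + 1 : ℕ) * x + x / 2 by ring,
        Real.cos_sub, Real.cos_add]
      ring
    rw [← sub_sub, mul_sub, ih, ← mul_div_assoc, t]
    simp only [zero_add]
    have a1 : (k : ℝ) + 1 ≠ 0 := by positivity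
    have a2 : (k : ℝ) + 1 + 1 ≠ 0 := by positivity
    generalize (∑' j : ℕ, Real.cos (((j + (k + 1) + 1 : ℕ) + 1 / 2) * x) / ((j + (k + 1) + 1 : ℕ) * ((j + (k + 1) + 1 : ℕ) + 1))) = T
    generalize Real.cos (((k + 1 : ℕ) + 1 / 2) * x) = A
    generalize Real.cos ((k + 1 / 2) * x) = B
    push_cast
    field_simp
    ring


/-- For every `k ≥ 1` and `x ∈ (0, 2π)`, the tail series
`∑_{j=k+1}^∞ cos((j+1/2)x)/(j(j+1))` converges absolutely, and
`2 sin(x/2) R_k(x) = cos((k+1/2)x)/(k+1) - ∑_{j=k+1}^∞ cos((j+1/2)x)/(j(j+1))`,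
where `R_k(x) = (π - x)/2 - ∑_{j=1}^k sin(jx)/j`. -/
theorem lanczos_remainder_identity (k : ℕ) (hk : 1 ≤ k) (x : ℝ)
    (hx : x ∈ Set.Ioo (0 : ℝ) (2 * Real.pi)) :
    (Summable fun j : ℕ =>
        |Real.cos (((j + k + 1 : ℕ) + 1 / 2) * x) / ((j + k + 1 : ℕ) * ((j + k + 1 : ℕ) + 1))|) ∧
    2 * Real.sin (x / 2) * ((Real.pi - x) / 2 - ∑ j ∈ Finset.Icc 1 k, Real.sin (j * x) / j)
      = Real.cos ((k + 1 / 2) * x) / (k + 1)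
        - ∑' j : ℕ,
            Real.cos (((j + k + 1 : ℕ) + 1 / 2) * x) / ((j + k + 1 : ℕ) * ((j + k + 1 : ℕ) + 1)) := by
  exact ⟨aux_summ' x k, aux_all x hx k⟩
end
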